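/- Let φ(x,t) = t^p + a(x) t^q with 1 < p < q < ∞, a a nonnegative function in C^{0,α}(ℝⁿ) for some α ∈ (0,1], and assume q/p ≤ 1 + α/n. Let Ω ⊆ ℝⁿ be open and suppose ℝⁿ∖Ω is locally uniformly infimally φ-fat with parameters c_fat > 0 and 0 < r_o ≤ 1. Then there is a constant c = c(n,p,q,c_fat) such that for every z ∈ ℝⁿ∖Ω, every 0 < r < r_o in the p-phase, i.e. with inf_{B(z,r)} a ≤ [a]_{0,α} r^α, and every u ∈ Lip_0(Ω): ⨍_{B(z,r)} φ(x,|u(x)|) dx ≤ c · (1 + [a]_{0,α} · ‖r ∇u‖_{L^p(B(z,r))}^{q−p}) · ⨍_{B(z,r)} |r ∇u(x)|^p dx. -/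

import Mathlib

open MeasureTheory Metric Set

noncomputable section

/-- Euclidean space `ℝⁿ`. -/
abbrev En (n : ℕ) : Type := EuclideanSpace ℝ (Fin n)

/-- Norm of the (a.e. defined, by Rademacher's theorem) gradient of `u` at `x`. -/
def gnorm {n : ℕ} (u : En n → ℝ) (x : En n) : ℝ := ‖fderiv ℝ u x‖

/-- Admissible test functions for the level-`t` capacity of `E` in `O`:
Lipschitz on the closure of `O`, `u ≥ t` on `E`, `u = 0` on `∂O`. -/
def Adm {n : ℕ} (E O : Set (En n)) (t : ℝ) : Set (En n → ℝ) :=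
  {u | (∃ K, LipschitzOnWith K u (closure O)) ∧ (∀ x ∈ E, t ≤ u x) ∧
    ∀ x ∈ frontier O, u x = 0}

/-- Level-`t` variational capacity with integrand `ψ` and normalization `ψm`. -/
def capLevel {n : ℕ} (ψ : En n → ℝ → ℝ) (ψm : ℝ → ℝ)
    (E O : Set (En n)) (t : ℝ) : ℝ :=
  sInf ((fun u => ∫ x in O, ψ x (gnorm u x) / ψm t) '' Adm E O t)

/-- Infimal capacity with integrand `ψ` and normalization `ψm`. -/
def capInfGen {n : ℕ} (ψ : En n → ℝ → ℝ) (ψm : ℝ → ℝ) (E O : Set (En n)) : ℝ :=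
  ⨅ t : Ioi (0 : ℝ), capLevel ψ ψm E O (t : ℝ)

/-- The double-phase integrand `φ(x,t) = t^p + a(x) t^q`. -/
def phi {n : ℕ} (a : En n → ℝ) (p q : ℝ) (x : En n) (t : ℝ) : ℝ :=
  t ^ p + a x * t ^ q

/-- `a_O^- = inf_{x ∈ O} a(x)`. -/
def aInfOn {n : ℕ} (a : En n → ℝ) (O : Set (En n)) : ℝ := sInf (a '' O)

/-- `a_O^+ = sup_{x ∈ O} a(x)`. -/
def aSupOn {n : ℕ} (a : En n → ℝ) (O : Set (En n)) : ℝ := sSup (a '' O)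

/-- `φ_O^-(t) = t^p + a_O^- t^q`. -/
def phiMinus {n : ℕ} (a : En n → ℝ) (p q : ℝ) (O : Set (En n)) (t : ℝ) : ℝ :=
  t ^ p + aInfOn a O * t ^ q

/-- Level-`t` variational capacity for the double-phase integrand. -/
def capPhiLevel {n : ℕ} (a : En n → ℝ) (p q t : ℝ) (E O : Set (En n)) : ℝ :=
  capLevel (phi a p q) (phiMinus a p q O) E O t

/-- Infimal `φ`-capacity. -/
def capPhiInf {n : ℕ} (a : En n → ℝ) (p q : ℝ) (E O : Set (En n)) : ℝ :=
  ⨅ t : Ioi (0 : ℝ), capPhiLevel a p q (t : ℝ) E O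

/-- Variational `p`-capacity. -/
def capP {n : ℕ} (p : ℝ) (E O : Set (En n)) : ℝ :=
  sInf ((fun u => ∫ x in O, gnorm u x ^ p) '' Adm E O 1)

/-- The rescaled set `{x ∈ B̄(0,1/2) : z + r x ∈ E}`. -/
def shiftedSet {n : ℕ} (E : Set (En n)) (z : En n) (r : ℝ) : Set (En n) :=
  {x ∈ closedBall (0 : En n) (1 / 2) | z + r • x ∈ E}

/-- Local uniform infimal `φ`-fatness with parameters `cfat` and `ro`. -/
def LocUnifPhiFat {n : ℕ} (a : En n → ℝ) (p q : ℝ) (E : Set (En n))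
    (cfat ro : ℝ) : Prop :=
  ∀ z ∈ E, ∀ r : ℝ, 0 < r → r < ro →
    cfat ≤ capPhiInf (fun x => a (z + r • x)) p q (shiftedSet E z r) (ball (0 : En n) 1)

/-- Local uniform `p`-fatness with parameters `cfat` and `ro`. -/
def LocUnifPFat {n : ℕ} (p : ℝ) (E : Set (En n)) (cfat ro : ℝ) : Prop :=
  ∀ z ∈ E, ∀ r : ℝ, 0 < r → r < ro →
    cfat ≤ capP p (shiftedSet E z r) (ball (0 : En n) 1)

/-- `Lip_0(Ω)`: Lipschitz functions with compact support contained in `Ω`,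
extended by zero to `ℝⁿ`. -/
def Lip0 {n : ℕ} (Ω : Set (En n)) : Set (En n → ℝ) :=
  {u | (∃ K, LipschitzWith K u) ∧ HasCompactSupport u ∧ tsupport u ⊆ Ω}

/-- Restricted centered maximal operator `M_R f(x) = sup_{0<r<R} ⨍_{B(x,r)} |f|`. -/
def maxOp {n : ℕ} (R : ℝ) (f : En n → ℝ) (x : En n) : ℝ :=
  ⨆ r : Ioo (0 : ℝ) R, ⨍ y in ball x (r : ℝ), |f y|

open scoped ENNReal NNReal

/-- Jensen's inequality for the power function, with a weight. -/
theorem rpow_lintegral_mul_le {X : Type*} [MeasurableSpace X] {μ : Measure X} {s : ℝ} (hs : 1 ≤ s)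
    {w f : X → ℝ≥0∞} (hw : Measurable w) (hf : Measurable f) :
    (∫⁻ x, w x * f x ∂μ) ^ s ≤ (∫⁻ x, w x ∂μ) ^ (s - 1) * ∫⁻ x, w x * f x ^ s ∂μ := by
  have s0 : 0 < s := by linarith
  have hb : 0 ≤ 1 / s := by positivity
  have ha : 0 ≤ 1 - 1 / s := by
    rw [sub_nonneg, div_le_one s0]; exact hs
  have key := ENNReal.lintegral_mul_norm_pow_le (μ := μ) hw.aemeasurable
    (hw.mul (hf.pow_const s)).aemeasurable ha hb (by ring)
  have e : ∀ x, w x ^ (1 - 1 / s) * ((fun x => w x * f x ^ s) x) ^ (1 / s) = w x * f x := by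
    intro x
    simp only
    rw [ENNReal.mul_rpow_of_nonneg _ _ hb, ← ENNReal.rpow_mul, mul_one_div_cancel s0.ne',
      ENNReal.rpow_one, ← mul_assoc, ← ENNReal.rpow_add_of_nonneg _ _ ha hb]
    simp
  simp only [Pi.mul_apply] at key
  simp_rw [e] at key
  refine (ENNReal.rpow_le_rpow key s0.le).trans_eq ?_
  rw [ENNReal.mul_rpow_of_nonneg _ _ s0.le, ← ENNReal.rpow_mul, ← ENNReal.rpow_mul,
    one_div_mul_cancel s0.ne', ENNReal.rpow_one, sub_mul, one_div_mul_cancel s0.ne', one_mul]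

/-- Jensen's inequality for the power function. -/
theorem rpow_lintegral_le {X : Type*} [MeasurableSpace X] {μ : Measure X} {s : ℝ} (hs : 1 ≤ s)
    {f : X → ℝ≥0∞} (hf : Measurable f) :
    (∫⁻ x, f x ∂μ) ^ s ≤ μ univ ^ (s - 1) * ∫⁻ x, f x ^ s ∂μ := by
  simpa using rpow_lintegral_mul_le (μ := μ) hs measurable_one hf

theorem lintegral_comp_add_smul {n : ℕ} (c : En n) {s : ℝ} (hs : 0 < s) (G : En n → ℝ≥0∞) :
    ∫⁻ y, G (c + s • y) = ENNReal.ofReal ((s ^ n)⁻¹) * ∫⁻ y, G y := by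
  have h1 : ∫⁻ y, G (c + s • y)
      = ∫⁻ y, G (c + y) ∂(Measure.map (fun y : En n => s • y) volume) :=
    (lintegral_map_equiv (fun y => G (c + y))
      (Homeomorph.smul (isUnit_iff_ne_zero.2 hs.ne').unit).toMeasurableEquiv).symm
  rw [h1, Measure.map_addHaar_smul _ hs.ne', lintegral_smul_measure,
    lintegral_add_left_eq_self G c, finrank_euclideanSpace_fin, abs_of_pos (by positivity)]
  rfl

theorem add_smul_sub_mem_ball {n : ℕ} {x y : En n} {t : ℝ} (ht : t ∈ Ioo (0 : ℝ) 1)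
    (hx : x ∈ ball (0 : En n) 1) (hy : y ∈ ball (0 : En n) 1) :
    x + t • (y - x) ∈ ball (0 : En n) 1 := by
  have := (convex_ball (0 : En n) 1) hx hy (sub_nonneg.2 ht.2.le) ht.1.le (by ring)
  convert this using 1
  module

theorem setLIntegral_segment_le {n : ℕ} {x : En n} (hx : x ∈ ball (0 : En n) 1) {t : ℝ}
    (ht : t ∈ Ioo (0 : ℝ) 1) (G : En n → ℝ≥0∞) :
    ∫⁻ y in ball (0 : En n) 1, G (x + t • (y - x))
      ≤ ENNReal.ofReal ((t ^ n)⁻¹) * ∫⁻ y in ball (0 : En n) 1, G y := by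
  rw [← lintegral_indicator measurableSet_ball, ← lintegral_indicator measurableSet_ball,
    ← lintegral_comp_add_smul (x - t • x) ht.1]
  refine lintegral_mono fun y => ?_
  by_cases hy : y ∈ ball (0 : En n) 1
  · have e : x - t • x + t • y = x + t • (y - x) := by module
    rw [e, indicator_of_mem hy, indicator_of_mem (add_smul_sub_mem_ball ht hx hy)]
  · rw [indicator_of_notMem hy]; exact zero_le

theorem lintegral_lintegral_segment_le {n : ℕ} {t : ℝ}
    (ht : t ∈ Ioo (0 : ℝ) 1) {G : En n → ℝ≥0∞} (hG : Measurable G) :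
    ∫⁻ x in ball (0 : En n) 1, ∫⁻ y in ball (0 : En n) 1, G (x + t • (y - x))
      ≤ 2 ^ n * volume (ball (0 : En n) 1) * ∫⁻ y in ball (0 : En n) 1, G y := by
  have key : ∀ (t : ℝ), t ∈ Ioo (0 : ℝ) 1 → 1 / 2 ≤ t → ∀ x ∈ ball (0 : En n) 1,
      ∫⁻ y in ball (0 : En n) 1, G (x + t • (y - x))
        ≤ 2 ^ n * ∫⁻ y in ball (0 : En n) 1, G y := by
    intro t ht h x hx
    refine (setLIntegral_segment_le hx ht G).trans ?_
    gcongr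
    rw [← inv_pow, ENNReal.ofReal_pow (inv_nonneg.2 ht.1.le)]
    gcongr
    have : t⁻¹ ≤ 2 := by
      rw [inv_le_comm₀ ht.1 (by norm_num)]; linarith
    simpa using ENNReal.ofReal_le_ofReal this
  have fin : ∀ F : En n → ℝ≥0∞, (∀ x ∈ ball (0 : En n) 1, F x
      ≤ 2 ^ n * ∫⁻ y in ball (0 : En n) 1, G y) → ∫⁻ x in ball (0 : En n) 1, F x
        ≤ 2 ^ n * volume (ball (0 : En n) 1) * ∫⁻ y in ball (0 : En n) 1, G y := by
    intro F hF
    refine (setLIntegral_mono' measurableSet_ball hF).trans_eq ?_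
    rw [setLIntegral_const]; ring
  rcases le_total (1 / 2) t with h | h
  · exact fin _ (key t ht h)
  · rw [lintegral_lintegral_swap (by fun_prop)]
    refine fin _ fun y hy => ?_
    have := key (1 - t) ⟨by linarith [ht.2], by linarith [ht.1]⟩ (by linarith) y hy
    refine (lintegral_congr fun x => ?_).trans_le this
    congr 1; module

theorem lintegral_ofReal_rpow_ne_top {r : ℝ} (hr : -1 < r) :
    ∫⁻ t in Ioo (0 : ℝ) 1, ENNReal.ofReal (t ^ r) ≠ ⊤ := by
  have h := (intervalIntegral.intervalIntegrable_rpow' (a := 0) (b := 1) hr).1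
  have h2 := (h.mono_set Ioo_subset_Ioc_self).lintegral_lt_top
  exact h2.ne

/-- Sobolev-type bound for the averages of a function over segments in the unit ball. -/
theorem exists_lintegral_segments_rpow_le (n : ℕ) {p s : ℝ} (hp : 1 < p) (hs : p ≤ s)
    (hn : n * (s / p - 1) ≤ 1) :
    ∃ C : ℝ≥0∞, C ≠ ⊤ ∧ ∀ g : En n → ℝ≥0∞, Measurable g →
      ∫⁻ x in ball (0 : En n) 1, (∫⁻ t in Ioo (0 : ℝ) 1, ∫⁻ y in ball (0 : En n) 1,
        g (x + t • (y - x))) ^ s ≤ C * (∫⁻ y in ball (0 : En n) 1, g y ^ p) ^ (s / p) := by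
  set V := volume (ball (0 : En n) 1) with hV
  have hVt : V ≠ ⊤ := measure_ball_lt_top.ne
  have p0 : 0 < p := by linarith
  have s0 : 0 < s := by linarith
  have hk : 1 ≤ s / p := (one_le_div p0).2 hs
  set κ := s / p with hκ
  set I := ∫⁻ t in Ioo (0 : ℝ) 1, ENNReal.ofReal (t ^ (-(1 / 2) : ℝ)) with hI
  set J := ∫⁻ t in Ioo (0 : ℝ) 1, ENNReal.ofReal (t ^ ((s - 1) / 2 - 1)) with hJ
  have hIt : I ≠ ⊤ := lintegral_ofReal_rpow_ne_top (by norm_num)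
  have hJt : J ≠ ⊤ := lintegral_ofReal_rpow_ne_top (by linarith)
  refine ⟨I ^ (s - 1) * ((V ^ (p - 1)) ^ κ * (2 ^ n * V)) * J, ?_, fun g hg => ?_⟩
  · have := ENNReal.rpow_ne_top_of_nonneg (by linarith : 0 ≤ s - 1) hIt
    have := ENNReal.rpow_ne_top_of_nonneg (by linarith : 0 ≤ κ)
      (ENNReal.rpow_ne_top_of_nonneg (by linarith : 0 ≤ p - 1) hVt)
    finiteness
  set N := ∫⁻ y in ball (0 : En n) 1, g y ^ p with hN
  have hm : Measurable fun z : (En n × ℝ) × En n => g (z.1.1 + z.1.2 • (z.2 - z.1.1)) := by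
    fun_prop
  have hmp : Measurable fun z : (En n × ℝ) × En n => g (z.1.1 + z.1.2 • (z.2 - z.1.1)) ^ p := by
    fun_prop
  set h : En n → ℝ → ℝ≥0∞ := fun x t => ∫⁻ y in ball (0 : En n) 1, g (x + t • (y - x)) with hh
  have hmh : Measurable fun z : En n × ℝ => h z.1 z.2 := hm.lintegral_prod_right'
  set G : En n → ℝ → ℝ≥0∞ := fun x t => ∫⁻ y in ball (0 : En n) 1, g (x + t • (y - x)) ^ p with hG
  have hmG : Measurable fun z : En n × ℝ => G z.1 z.2 := hmp.lintegral_prod_right'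
  have segment_jensen : ∀ x, (∫⁻ t in Ioo (0 : ℝ) 1, h x t) ^ s ≤ I ^ (s - 1) *
      ∫⁻ t in Ioo (0 : ℝ) 1, ENNReal.ofReal (t ^ ((s - 1) / 2)) * h x t ^ s := by
    intro x
    have hx : Measurable (h x) := hmh.comp measurable_prodMk_left
    have := rpow_lintegral_mul_le (μ := volume.restrict (Ioo (0 : ℝ) 1))
      (by linarith : 1 ≤ s) (w := fun t => ENNReal.ofReal (t ^ (-(1 / 2) : ℝ)))
      (f := fun t => ENNReal.ofReal (t ^ (1 / 2 : ℝ)) * h x t) (by fun_prop) (by fun_prop)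
    refine (Eq.trans_le ?_ this).trans_eq ?_
    · congr 1
      refine setLIntegral_congr_fun measurableSet_Ioo fun t ht => ?_
      rw [← mul_assoc, ← ENNReal.ofReal_mul (Real.rpow_nonneg ht.1.le _), ← Real.rpow_add ht.1]
      simp
    · congr 1
      refine setLIntegral_congr_fun measurableSet_Ioo fun t ht => ?_
      rw [ENNReal.mul_rpow_of_nonneg _ _ s0.le, ← mul_assoc,
        ENNReal.ofReal_rpow_of_nonneg (Real.rpow_nonneg ht.1.le _) s0.le,
        ← ENNReal.ofReal_mul (Real.rpow_nonneg ht.1.le _), ← Real.rpow_mul ht.1.le,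
        ← Real.rpow_add ht.1]
      congr 3; ring
  have ball_jensen : ∀ x t, h x t ^ s ≤ (V ^ (p - 1)) ^ κ * G x t ^ κ := by
    intro x t
    have := rpow_lintegral_le (μ := volume.restrict (ball (0 : En n) 1)) hp.le
      (f := fun y => g (x + t • (y - x))) (by fun_prop)
    rw [Measure.restrict_apply_univ] at this
    rw [← ENNReal.mul_rpow_of_nonneg _ _ (by linarith : 0 ≤ κ)]
    refine Eq.trans_le ?_ (ENNReal.rpow_le_rpow this (by linarith : 0 ≤ κ))
    rw [← ENNReal.rpow_mul, hκ, mul_div_cancel₀ _ p0.ne']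
  have ball_bound : ∀ t ∈ Ioo (0 : ℝ) 1, ∫⁻ x in ball (0 : En n) 1, G x t ^ κ
      ≤ ENNReal.ofReal (t ^ (-1 : ℝ)) * (2 ^ n * V) * N ^ κ := by
    intro t ht
    have b1 : ∀ x ∈ ball (0 : En n) 1, G x t ^ κ
        ≤ (ENNReal.ofReal (t ^ (-1 : ℝ)) * N ^ (κ - 1)) * G x t := by
      intro x hx
      have hle := setLIntegral_segment_le hx ht (fun y => g y ^ p)
      have e : G x t ^ κ = G x t ^ (κ - 1) * G x t := by
        nth_rw 3 [← ENNReal.rpow_one (G x t)]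
        rw [← ENNReal.rpow_add_of_nonneg _ _ (by linarith) zero_le_one]
        congr 1; ring
      rw [e]
      gcongr
      refine (ENNReal.rpow_le_rpow hle (by linarith : 0 ≤ κ - 1)).trans ?_
      rw [ENNReal.mul_rpow_of_nonneg _ _ (by linarith)]
      gcongr
      have hpos : 0 < (t ^ n)⁻¹ := by have := ht.1; positivity
      rw [ENNReal.ofReal_rpow_of_pos hpos]
      refine ENNReal.ofReal_le_ofReal ?_
      rw [← Real.rpow_natCast, ← Real.rpow_neg ht.1.le, ← Real.rpow_mul ht.1.le]
      exact Real.rpow_le_rpow_of_exponent_ge ht.1 ht.2.le (by linarith)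
    refine (setLIntegral_mono' measurableSet_ball b1).trans ?_
    have hmGt : Measurable fun x => G x t := hmG.comp measurable_prodMk_right
    rw [lintegral_const_mul _ hmGt]
    refine (mul_le_mul_right (lintegral_lintegral_segment_le ht (hg.pow_const p)) _).trans_eq ?_
    have e : N ^ κ = N ^ (κ - 1) * N := by
      nth_rw 3 [← ENNReal.rpow_one N]
      rw [← ENNReal.rpow_add_of_nonneg _ _ (by linarith) zero_le_one]
      congr 1; ring
    rw [e]; ring
  calc _ ≤ ∫⁻ x in ball (0 : En n) 1, I ^ (s - 1) * ∫⁻ t in Ioo (0 : ℝ) 1,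
        ENNReal.ofReal (t ^ ((s - 1) / 2)) * ((V ^ (p - 1)) ^ κ * G x t ^ κ) := by
        refine lintegral_mono fun x => (segment_jensen x).trans ?_
        gcongr with t
        exact ball_jensen x t
    _ = I ^ (s - 1) * ∫⁻ t in Ioo (0 : ℝ) 1, ∫⁻ x in ball (0 : En n) 1,
        ENNReal.ofReal (t ^ ((s - 1) / 2)) * ((V ^ (p - 1)) ^ κ * G x t ^ κ) := by
        have hm2 : Measurable fun z : En n × ℝ =>
            ENNReal.ofReal (z.2 ^ ((s - 1) / 2)) * ((V ^ (p - 1)) ^ κ * G z.1 z.2 ^ κ) := by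
          fun_prop
        rw [lintegral_const_mul _ hm2.lintegral_prod_right', lintegral_lintegral_swap]
        exact hm2.aemeasurable
    _ ≤ I ^ (s - 1) * ∫⁻ t in Ioo (0 : ℝ) 1, ENNReal.ofReal (t ^ ((s - 1) / 2 - 1)) *
          ((V ^ (p - 1)) ^ κ * (2 ^ n * V) * N ^ κ) := by
        gcongr I ^ (s - 1) * ?_
        refine setLIntegral_mono' measurableSet_Ioo fun t ht => ?_
        have hmGt : Measurable fun x => G x t := hmG.comp measurable_prodMk_right
        rw [lintegral_const_mul _ (by fun_prop), lintegral_const_mul _ (by fun_prop)]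
        refine (mul_le_mul_right (mul_le_mul_right (ball_bound t ht) _) _).trans_eq ?_
        rw [sub_eq_add_neg ((s - 1) / 2), Real.rpow_add ht.1,
          ENNReal.ofReal_mul (Real.rpow_nonneg ht.1.le _)]
        ring
    _ = _ := by
        rw [lintegral_mul_const _ (by fun_prop)]
        ring

/-- The fundamental theorem of calculus along a segment. -/
theorem enorm_sub_le_lintegral_segment {n : ℕ} {w : En n → ℝ} {K : ℝ≥0} (hw : LipschitzWith K w)
    (x y : En n)
    (h : ∀ᵐ t : ℝ, t ∈ Ioo (0 : ℝ) 1 → DifferentiableAt ℝ w (x + t • (y - x))) :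
    ‖w y - w x‖ₑ ≤
      ‖y - x‖ₑ * ∫⁻ t in Ioo (0 : ℝ) 1, ‖fderiv ℝ w (x + t • (y - x))‖ₑ := by
  set f : ℝ → ℝ := fun t => w (x + t • (y - x)) with hf
  have hl : LipschitzWith (K * ‖y - x‖₊) f := by
    refine LipschitzWith.of_dist_le_mul fun s t => ?_
    refine (hw.dist_le_mul _ _).trans_eq ?_
    rw [dist_add_left, dist_eq_norm, ← sub_smul, norm_smul, ← dist_eq_norm]
    push_cast
    ring
  have hac : AbsolutelyContinuousOnInterval f 0 1 :=
    hl.lipschitzOnWith.absolutelyContinuousOnInterval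
  have hftc := hac.integral_deriv_eq_sub
  have e : f 1 - f 0 = w y - w x := by simp [hf]
  rw [← e, ← hftc, intervalIntegral.integral_of_le zero_le_one, integral_Ioc_eq_integral_Ioo]
  refine (enorm_integral_le_lintegral_enorm _).trans ?_
  rw [← lintegral_const_mul]
  · refine lintegral_mono_ae ?_
    rw [ae_restrict_iff' measurableSet_Ioo]
    filter_upwards [h] with t ht htI
    have hd : HasDerivAt f (fderiv ℝ w (x + t • (y - x)) (y - x)) t := by
      have h1 : HasDerivAt (fun t : ℝ => x + t • (y - x)) (y - x) t := by
        simpa using ((hasDerivAt_id t).smul_const (y - x)).const_add x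
      exact (ht htI).hasFDerivAt.comp_hasDerivAt t h1
    rw [hd.deriv, mul_comm]
    exact ContinuousLinearMap.le_opENorm _ _
  · exact ((measurable_fderiv ℝ w).comp (by fun_prop)).enorm

theorem ae_ae_differentiableAt_segment {n : ℕ} {w : En n → ℝ} {K : ℝ≥0} (hw : LipschitzWith K w)
    (x : En n) :
    ∀ᵐ y : En n, ∀ᵐ t : ℝ, t ∈ Ioo (0 : ℝ) 1 → DifferentiableAt ℝ w (x + t • (y - x)) := by
  have hm : MeasurableSet {z | DifferentiableAt ℝ w z} := measurableSet_of_differentiableAt ℝ w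
  have hms : MeasurableSet {z : En n × ℝ | z.2 ∈ Ioo (0 : ℝ) 1 →
      DifferentiableAt ℝ w (x + z.2 • (z.1 - x))} := by
    have h1 : Measurable fun z : En n × ℝ => x + z.2 • (z.1 - x) := by fun_prop
    exact (measurable_snd measurableSet_Ioo).imp (h1 hm)
  refine (Measure.ae_ae_comm (μ := volume) (ν := volume)
    (p := fun (y : En n) (t : ℝ) => t ∈ Ioo (0 : ℝ) 1 →
      DifferentiableAt ℝ w (x + t • (y - x))) hms).2 ?_
  refine Filter.Eventually.of_forall fun t => ?_
  by_cases ht : t ∈ Ioo (0 : ℝ) 1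
  · have h0 : ∫⁻ z, ({z | DifferentiableAt ℝ w z}ᶜ.indicator 1 z : ℝ≥0∞) = 0 := by
      rw [lintegral_indicator_one hm.compl]
      exact hw.ae_differentiableAt
    have h1 := lintegral_comp_add_smul (x - t • x) ht.1
      ({z | DifferentiableAt ℝ w z}ᶜ.indicator 1)
    rw [h0, mul_zero] at h1
    replace h1 := (lintegral_eq_zero_iff ((measurable_one.indicator hm.compl).comp
      (by fun_prop : Measurable fun y : En n => x - t • x + t • y))).1 h1
    filter_upwards [h1] with y hy _
    have e : x - t • x + t • y = x + t • (y - x) := by module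
    by_contra hcon
    simp [e, indicator, hcon] at hy
  · exact Filter.Eventually.of_forall fun y hy => absurd hy ht

/-- Sobolev–Poincaré inequality on the unit ball. -/
theorem exists_sobolev_poincare (n : ℕ) {p s : ℝ} (hp : 1 < p) (hs : p ≤ s)
    (hn : n * (s / p - 1) ≤ 1) :
    ∃ C : ℝ≥0∞, C ≠ ⊤ ∧ ∀ w : En n → ℝ, (∃ K, LipschitzWith K w) →
      ∫⁻ x in ball (0 : En n) 1, ‖w x - ⨍ y in ball (0 : En n) 1, w y‖ₑ ^ s
        ≤ C * (∫⁻ x in ball (0 : En n) 1, ‖fderiv ℝ w x‖ₑ ^ p) ^ (s / p) := by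
  obtain ⟨C, hC, h⟩ := exists_lintegral_segments_rpow_le n hp hs hn
  set V := volume (ball (0 : En n) 1) with hV
  have hVt : V ≠ ⊤ := measure_ball_lt_top.ne
  have hV0 : V ≠ 0 := (measure_ball_pos volume _ one_pos).ne'
  have s0 : 0 < s := by linarith
  refine ⟨(V⁻¹ * 2) ^ s * C, ?_, fun w ⟨K, hw⟩ => ?_⟩
  · have := ENNReal.rpow_ne_top_of_nonneg s0.le
      (ENNReal.mul_ne_top (ENNReal.inv_ne_top.2 hV0) (ENNReal.ofNat_ne_top (n := 2)))
    finiteness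
  have hmf : Measurable fun z => ‖fderiv ℝ w z‖ₑ := (measurable_fderiv ℝ w).enorm
  have hInt : IntegrableOn w (ball (0 : En n) 1) :=
    (hw.continuous.continuousOn.integrableOn_compact (isCompact_closedBall 0 1)).mono_set
      ball_subset_closedBall
  have hprob : IsProbabilityMeasure
      ((volume.restrict (ball (0 : En n) 1) univ)⁻¹ • volume.restrict (ball (0 : En n) 1)) := by
    constructor
    simp only [Measure.smul_apply, Measure.restrict_apply_univ, smul_eq_mul]
    exact ENNReal.inv_mul_cancel hV0 hVt
  have key : ∀ x ∈ ball (0 : En n) 1, ‖w x - ⨍ y in ball (0 : En n) 1, w y‖ₑ ≤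
      V⁻¹ * 2 * ∫⁻ t in Ioo (0 : ℝ) 1, ∫⁻ y in ball (0 : En n) 1,
        ‖fderiv ℝ w (x + t • (y - x))‖ₑ := by
    intro x hx
    have e : w x - ⨍ y in ball (0 : En n) 1, w y = ⨍ y in ball (0 : En n) 1, (w x - w y) := by
      simp only [average]
      rw [integral_sub (integrable_const _)]
      · rw [integral_const, probReal_univ, one_smul]
      · exact hInt.smul_measure (by simp [hV0, ← hV])
    rw [e, average]
    refine (enorm_integral_le_lintegral_enorm _).trans ?_
    rw [lintegral_smul_measure, Measure.restrict_apply_univ, smul_eq_mul, mul_assoc]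
    gcongr V⁻¹ * ?_
    rw [← lintegral_lintegral_swap, ← lintegral_const_mul]
    · refine setLIntegral_mono_ae' measurableSet_ball ?_
      filter_upwards [ae_ae_differentiableAt_segment hw x] with y hy hyB
      rw [enorm_sub_rev]
      refine (enorm_sub_le_lintegral_segment hw x y hy).trans ?_
      gcongr
      rw [← ofReal_norm, ← dist_eq_norm]
      have : dist y x ≤ 2 := by
        have := dist_triangle_right y x 0
        rw [mem_ball] at hx hyB
        linarith
      simpa using ENNReal.ofReal_le_ofReal this
    · have : Measurable fun z : En n × ℝ => ‖fderiv ℝ w (x + z.2 • (z.1 - x))‖ₑ :=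
        hmf.comp (by fun_prop)
      exact this.lintegral_prod_right'
    · have : Measurable fun z : En n × ℝ => ‖fderiv ℝ w (x + z.2 • (z.1 - x))‖ₑ :=
        hmf.comp (by fun_prop)
      exact this.aemeasurable
  calc _ ≤ ∫⁻ x in ball (0 : En n) 1, (V⁻¹ * 2) ^ s * (∫⁻ t in Ioo (0 : ℝ) 1,
        ∫⁻ y in ball (0 : En n) 1, ‖fderiv ℝ w (x + t • (y - x))‖ₑ) ^ s := by
        refine setLIntegral_mono' measurableSet_ball fun x hx => ?_
        rw [← ENNReal.mul_rpow_of_nonneg _ _ s0.le]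
        exact ENNReal.rpow_le_rpow (key x hx) s0.le
    _ ≤ _ := by
        rw [lintegral_const_mul', mul_assoc]
        · gcongr
          exact h _ hmf
        · exact ENNReal.rpow_ne_top_of_nonneg s0.le
            (ENNReal.mul_ne_top (ENNReal.inv_ne_top.2 hV0) (ENNReal.ofNat_ne_top (n := 2)))

theorem closure_unit_ball (n : ℕ) : closure (ball (0 : En n) 1) = closedBall 0 1 :=
  closure_ball 0 one_ne_zero

theorem gnorm_const_mul {n : ℕ} {t : ℝ} (ht : 0 < t) (u : En n → ℝ) (x : En n) :
    gnorm (fun y => t * u y) x = t * gnorm u x := by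
  have h : (fun y => t * u y) = t • u := rfl
  rw [gnorm, gnorm, h, fderiv_const_smul_field, Pi.smul_apply, norm_smul,
    Real.norm_of_nonneg ht.le]

theorem aInfOn_nonneg {n : ℕ} {a : En n → ℝ} (ha : ∀ x, 0 ≤ a x) (O : Set (En n)) :
    0 ≤ aInfOn a O :=
  Real.sInf_nonneg (by rintro _ ⟨x, -, rfl⟩; exact ha x)

theorem capPhiInf_le_setIntegral {n : ℕ} {b : En n → ℝ} {p q : ℝ} {E : Set (En n)}
    (hb : ∀ x, 0 ≤ b x) {v : En n → ℝ} (hv : v ∈ Adm E (ball (0 : En n) 1) 1) {t : ℝ}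
    (ht : 0 < t) :
    capPhiInf b p q E (ball (0 : En n) 1) ≤
      ∫ x in ball (0 : En n) 1, phi b p q x (t * gnorm v x) /
        phiMinus b p q (ball (0 : En n) 1) t := by
  have hnn : ∀ (τ : ℝ), 0 < τ → ∀ u : En n → ℝ,
      0 ≤ ∫ x in ball (0 : En n) 1, phi b p q x (gnorm u x) /
        phiMinus b p q (ball (0 : En n) 1) τ := by
    intro τ hτ u
    refine integral_nonneg fun x => ?_
    have := hb x
    have := aInfOn_nonneg hb (ball (0 : En n) 1)
    have : 0 ≤ gnorm u x := norm_nonneg _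
    simp only [phi, phiMinus, Pi.zero_apply]
    positivity
  have h1 : capPhiInf b p q E (ball (0 : En n) 1) ≤ capPhiLevel b p q t E (ball (0 : En n) 1) := by
    refine ciInf_le (f := fun t : Ioi (0 : ℝ) => capPhiLevel b p q (t : ℝ) E (ball (0 : En n) 1))
      ⟨0, ?_⟩ (⟨t, ht⟩ : Ioi (0 : ℝ))
    rintro _ ⟨τ, rfl⟩
    refine Real.sInf_nonneg ?_
    rintro _ ⟨u, -, rfl⟩
    exact hnn τ τ.2 u
  refine h1.trans (csInf_le ⟨0, ?_⟩ ⟨fun y => t * v y, ?_, ?_⟩)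
  · rintro _ ⟨u, -, rfl⟩
    exact hnn t ht u
  · obtain ⟨⟨K, hK⟩, h2, h3⟩ := hv
    refine ⟨⟨‖t‖₊ * K, ?_⟩, fun x hx => ?_, fun x hx => by simp [h3 x hx]⟩
    · refine LipschitzOnWith.of_dist_le_mul fun x hx y hy => ?_
      rw [Real.dist_eq, ← mul_sub, abs_mul, ← Real.dist_eq]
      have := hK.dist_le_mul x hx y hy
      push_cast
      rw [Real.norm_eq_abs, mul_assoc]
      gcongr
    · have := h2 x hx
      nlinarith
  · simp only [gnorm_const_mul ht]

/-- The infimal `φ`-capacity is bounded by the `p`-energy of every admissible function. -/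
theorem ofReal_le_lintegral_of_le_capPhiInf {n : ℕ} {b : En n → ℝ} {p q c : ℝ} {E : Set (En n)}
    (hp : 1 < p) (hpq : p < q)
    (hb : ∀ x, 0 ≤ b x) (hbc : Continuous b) (hc : c ≤ capPhiInf b p q E (ball (0 : En n) 1))
    {v : En n → ℝ} (hv : v ∈ Adm E (ball (0 : En n) 1) 1) :
    ENNReal.ofReal c ≤ ∫⁻ x in ball (0 : En n) 1, ‖fderiv ℝ v x‖ₑ ^ p := by
  have p0 : 0 < p := by linarith
  have q0 : 0 < q := by linarith
  obtain ⟨⟨K, hK⟩, -⟩ := id hv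
  obtain ⟨M, hM⟩ : ∃ M, ∀ x ∈ closedBall (0 : En n) 1, b x ≤ M := by
    obtain ⟨M, hM⟩ := (isCompact_closedBall (0 : En n) 1).bddAbove_image hbc.continuousOn
    exact ⟨M, fun x hx => hM ⟨x, hx, rfl⟩⟩
  have hmf : Measurable fun z => ‖fderiv ℝ v z‖ₑ := (measurable_fderiv ℝ v).enorm
  set P := ∫⁻ x in ball (0 : En n) 1, ‖fderiv ℝ v x‖ₑ ^ p with hP
  set Q := ∫⁻ x in ball (0 : En n) 1, ‖fderiv ℝ v x‖ₑ ^ q with hQ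
  have hQt : Q ≠ ⊤ := by
    have : Q ≤ ∫⁻ x in ball (0 : En n) 1, (K : ℝ≥0∞) ^ q := by
      refine setLIntegral_mono' measurableSet_ball fun x hx => ?_
      gcongr
      have h1 := norm_fderiv_le_of_lipschitzOn ℝ (isOpen_ball.mem_nhds hx)
        (hK.mono subset_closure)
      exact ENNReal.coe_le_coe.2 h1
    refine (this.trans_lt ?_).ne
    rw [setLIntegral_const]
    exact ENNReal.mul_lt_top (ENNReal.rpow_lt_top_of_nonneg q0.le ENNReal.coe_ne_top)
      measure_ball_lt_top
  have key : ∀ t : ℝ, 0 < t → ENNReal.ofReal c ≤ P + ENNReal.ofReal (M * t ^ (q - p)) * Q := by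
    intro t ht
    have h1 := hc.trans (capPhiInf_le_setIntegral hb hv ht)
    refine (ENNReal.ofReal_le_ofReal (h1.trans (le_abs_self _))).trans ?_
    rw [← Real.norm_eq_abs, ofReal_norm]
    refine (enorm_integral_le_lintegral_enorm _).trans ?_
    rw [hP, hQ, ← lintegral_const_mul _ (by fun_prop), ← lintegral_add_left (by fun_prop)]
    refine setLIntegral_mono' measurableSet_ball fun x hx => ?_
    set g := gnorm v x with hg
    have hg0 : 0 ≤ g := norm_nonneg _
    have hMx := hM x (ball_subset_closedBall hx)
    have hbx := hb x
    have ha := aInfOn_nonneg hb (ball (0 : En n) 1)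
    have htp : 0 < t ^ p := Real.rpow_pos_of_pos ht _
    have e : ∀ r : ℝ, 0 < r → ‖fderiv ℝ v x‖ₑ ^ r = ENNReal.ofReal (g ^ r) := by
      intro r hr
      rw [← ENNReal.ofReal_rpow_of_nonneg hg0 hr.le, hg, gnorm, ofReal_norm]
    rw [e p p0, e q q0, ← ENNReal.ofReal_mul, ← ENNReal.ofReal_add, ← ofReal_norm,
      Real.norm_of_nonneg]
    · refine ENNReal.ofReal_le_ofReal ?_
      have htq : t ^ q = t ^ p * t ^ (q - p) := by rw [← Real.rpow_add ht]; ring_nf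
      rw [phi, phiMinus, Real.mul_rpow ht.le hg0, Real.mul_rpow ht.le hg0, div_le_iff₀]
      · have i1 : t ^ p * g ^ p + b x * (t ^ q * g ^ q)
            ≤ (g ^ p + M * t ^ (q - p) * g ^ q) * t ^ p := by
          rw [htq]
          have : b x * (t ^ p * t ^ (q - p) * g ^ q) ≤ M * (t ^ p * t ^ (q - p) * g ^ q) := by
            gcongr
          linarith
        refine i1.trans ?_
        have : 0 ≤ M := hbx.trans hMx
        gcongr
        have : 0 ≤ aInfOn b (ball (0 : En n) 1) * t ^ q := by positivity
        linarith
      · positivity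
    · simp only [phi, phiMinus]; positivity
    · positivity
    · have : 0 ≤ M := hbx.trans hMx
      positivity
    · have : 0 ≤ M := hbx.trans hMx
      positivity
  have hlim : Filter.Tendsto (fun t : ℝ => P + ENNReal.ofReal (M * t ^ (q - p)) * Q)
      (nhdsWithin 0 (Ioi 0)) (nhds P) := by
    have h0 : Filter.Tendsto (fun t : ℝ => M * t ^ (q - p)) (nhdsWithin 0 (Ioi 0)) (nhds 0) := by
      have : ContinuousAt (fun t : ℝ => M * t ^ (q - p)) 0 :=
        (Real.continuousAt_rpow_const _ _ (Or.inr (by linarith))).const_mul M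
      have h := this.tendsto.mono_left (nhdsWithin_le_nhds (s := Ioi 0))
      simpa [Real.zero_rpow (by linarith : q - p ≠ 0)] using h
    have h1 := ENNReal.Tendsto.mul_const (ENNReal.tendsto_ofReal h0) (Or.inr hQt)
    simpa using h1.const_add P
  refine ge_of_tendsto hlim ?_
  filter_upwards [self_mem_nhdsWithin] with t ht using key t ht

theorem admissible_cutoff {n : ℕ} {E : Set (En n)} (hE : E ⊆ closedBall (0 : En n) (1 / 2))
    {w : En n → ℝ} (hw : ∃ K, LipschitzWith K w) (hwE : ∀ x ∈ E, w x = 0) (k : ℝ) :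
    (fun x => 2 * (1 - ‖x‖) * (1 - k * w x)) ∈ Adm E (ball (0 : En n) 1) 1 := by
  obtain ⟨K, hK⟩ := hw
  refine ⟨?_, fun x hx => ?_, fun x hx => ?_⟩
  · obtain ⟨M, hM⟩ := (isCompact_closedBall (0 : En n) 1).exists_bound_of_continuousOn
      (f := fun x => 1 - k * w x)
      (continuous_const.sub (continuous_const.mul hK.continuous)).continuousOn
    have hM0 : 0 ≤ M := (norm_nonneg _).trans (hM 0 (by simp))
    refine ⟨(2 * M + 2 * (|k| * K)).toNNReal, LipschitzOnWith.of_dist_le_mul fun x hx y hy => ?_⟩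
    rw [closure_unit_ball] at hx hy
    have hy1 : ‖y‖ ≤ 1 := by simpa using hy
    rw [Real.coe_toNNReal _ (by positivity)]
    have h1 : |‖x‖ - ‖y‖| ≤ dist x y := by
      rw [dist_eq_norm]; exact abs_norm_sub_norm_le x y
    have h2 : |w x - w y| ≤ K * dist x y := by
      rw [← Real.dist_eq]; exact hK.dist_le_mul x y
    have h3 : |1 - k * w x| ≤ M := hM x hx
    have e : 2 * (1 - ‖x‖) * (1 - k * w x) - 2 * (1 - ‖y‖) * (1 - k * w y)
      = -(2 * ((‖x‖ - ‖y‖) * (1 - k * w x))) - 2 * ((1 - ‖y‖) * (k * (w x - w y))) := by ring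
    rw [Real.dist_eq, e]
    refine (abs_sub _ _).trans ?_
    rw [abs_neg, abs_mul, abs_mul, abs_mul, abs_mul, abs_mul, abs_two,
      abs_of_nonneg (sub_nonneg.2 hy1)]
    have i1 : |‖x‖ - ‖y‖| * |1 - k * w x| ≤ dist x y * M := by gcongr
    have i2 : (1 - ‖y‖) * (|k| * |w x - w y|) ≤ 1 * (|k| * (K * dist x y)) := by
      gcongr
      linarith [norm_nonneg y]
    linarith
  · have h1 : ‖x‖ ≤ 1 / 2 := by simpa using hE hx
    simp only [hwE x hx]
    linarith
  · rw [frontier_ball _ one_ne_zero, mem_sphere_zero_iff_norm] at hx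
    simp [hx]

theorem ae_enorm_fderiv_cutoff_le {n : ℕ} {w : En n → ℝ} (hw : ∃ K, LipschitzWith K w) {m : ℝ}
    (hm : m ≠ 0) :
    ∀ᵐ x : En n, x ∈ ball (0 : En n) 1 →
      ‖m‖ₑ * ‖fderiv ℝ (fun x => 2 * (1 - ‖x‖) * (1 - m⁻¹ * w x)) x‖ₑ ≤
        2 * (‖fderiv ℝ w x‖ₑ + ‖w x - m‖ₑ) := by
  obtain ⟨K, hK⟩ := hw
  filter_upwards [hK.ae_differentiableAt,
    (lipschitzWith_one_norm (E := En n)).ae_differentiableAt] with x hx hn hxB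
  have h1 : ‖x‖ ≤ 1 := by simpa using (ball_subset_closedBall hxB)
  have d1 : HasFDerivAt (fun x : En n => 2 * (1 - ‖x‖)) ((2 : ℝ) • -fderiv ℝ (fun x => ‖x‖) x) x :=
    (hn.hasFDerivAt.const_sub 1).const_mul 2
  have d2 : HasFDerivAt (fun x : En n => 1 - m⁻¹ * w x) (-(m⁻¹ • fderiv ℝ w x)) x :=
    (hx.hasFDerivAt.const_mul m⁻¹).const_sub 1
  have d := d1.mul d2
  have hN : ‖fderiv ℝ (fun x : En n => ‖x‖) x‖ ≤ 1 := by
    simpa using norm_fderiv_le_of_lipschitz ℝ (x₀ := x) (lipschitzWith_one_norm (E := En n))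
  have main : |m| * ‖fderiv ℝ (fun x => 2 * (1 - ‖x‖) * (1 - m⁻¹ * w x)) x‖ ≤
      2 * (‖fderiv ℝ w x‖ + |w x - m|) := by
    have hd := d.fderiv
    have hd' : fderiv ℝ (fun x => 2 * (1 - ‖x‖) * (1 - m⁻¹ * w x)) x = _ := hd
    rw [hd']
    have b1 : ‖(2 * (1 - ‖x‖)) • -(m⁻¹ • fderiv ℝ w x)‖ ≤ 2 * (|m|⁻¹ * ‖fderiv ℝ w x‖) := by
      rw [norm_smul, norm_neg, norm_smul, norm_inv, Real.norm_eq_abs m, Real.norm_of_nonneg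
        (by linarith)]
      gcongr
      linarith [norm_nonneg x]
    have b2 : ‖(1 - m⁻¹ * w x) • ((2 : ℝ) • -fderiv ℝ (fun x => ‖x‖) x)‖
        ≤ |m|⁻¹ * |w x - m| * 2 := by
      rw [norm_smul, norm_smul, norm_neg, Real.norm_of_nonneg zero_le_two, Real.norm_eq_abs]
      have : 1 - m⁻¹ * w x = -(m⁻¹ * (w x - m)) := by field_simp; ring
      rw [this, abs_neg, abs_mul, abs_inv]
      gcongr
      linarith
    have hm0 : 0 < |m| := abs_pos.2 hm
    calc _ ≤ |m| * (2 * (|m|⁻¹ * ‖fderiv ℝ w x‖) + |m|⁻¹ * |w x - m| * 2) := by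
          gcongr
          exact (norm_add_le _ _).trans (add_le_add b1 b2)
      _ = _ := by field_simp
  have := ENNReal.ofReal_le_ofReal main
  rw [ENNReal.ofReal_mul (abs_nonneg _), ENNReal.ofReal_mul zero_le_two,
    ENNReal.ofReal_add (norm_nonneg _) (abs_nonneg _), ← Real.norm_eq_abs, ← Real.norm_eq_abs,
    ofReal_norm, ofReal_norm, ofReal_norm, ofReal_norm] at this
  simpa using this

/-- The Mazya capacitary Sobolev–Poincaré inequality on the unit ball for functions vanishing
on a set of positive capacity. -/
theorem exists_mazya_sobolev (n : ℕ) {p s : ℝ} (hp : 1 < p) (hs : p ≤ s)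
    (hn : n * (s / p - 1) ≤ 1) {c₀ : ℝ≥0∞} (hc₀ : c₀ ≠ 0) (hct : c₀ ≠ ⊤) :
    ∃ C : ℝ≥0∞, C ≠ ⊤ ∧ ∀ (E : Set (En n)) (w : En n → ℝ), E ⊆ closedBall (0 : En n) (1 / 2) →
      (∃ K, LipschitzWith K w) → (∀ x ∈ E, w x = 0) →
      (∀ v ∈ Adm E (ball (0 : En n) 1) 1, c₀ ≤ ∫⁻ x in ball (0 : En n) 1, ‖fderiv ℝ v x‖ₑ ^ p) →
      ∫⁻ x in ball (0 : En n) 1, ‖w x‖ₑ ^ s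
        ≤ C * (∫⁻ x in ball (0 : En n) 1, ‖fderiv ℝ w x‖ₑ ^ p) ^ (s / p) := by
  have p0 : 0 < p := by linarith
  have s0 : 0 < s := by linarith
  obtain ⟨C₁, hC₁, h₁⟩ := exists_sobolev_poincare n hp le_rfl (by simp [p0.ne'])
  obtain ⟨C₂, hC₂, h₂⟩ := exists_sobolev_poincare n hp hs hn
  have hdiv : p / p = 1 := div_self p0.ne'
  set V := volume (ball (0 : En n) 1) with hV
  have hVt : V ≠ ⊤ := measure_ball_lt_top.ne
  set D := c₀⁻¹ * ((2 : ℝ≥0∞) ^ p * 2 ^ (p - 1) * (1 + C₁)) with hD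
  have hDt : D ≠ ⊤ := by
    have := ENNReal.inv_ne_top.2 hc₀
    have := ENNReal.rpow_ne_top_of_nonneg p0.le (ENNReal.ofNat_ne_top (n := 2))
    have := ENNReal.rpow_ne_top_of_nonneg (by linarith : 0 ≤ p - 1) (ENNReal.ofNat_ne_top (n := 2))
    finiteness
  refine ⟨2 ^ (s - 1) * (C₂ + D ^ (s / p) * V), ?_, fun E w hE hw hwE hcap => ?_⟩
  · have := ENNReal.rpow_ne_top_of_nonneg (by linarith : 0 ≤ s - 1) (ENNReal.ofNat_ne_top (n := 2))
    have := ENNReal.rpow_ne_top_of_nonneg (by positivity : 0 ≤ s / p) hDt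
    finiteness
  obtain ⟨K, hK⟩ := id hw
  have hmw : Measurable w := hK.continuous.measurable
  have hmf : Measurable fun z => ‖fderiv ℝ w z‖ₑ := (measurable_fderiv ℝ w).enorm
  set N := ∫⁻ x in ball (0 : En n) 1, ‖fderiv ℝ w x‖ₑ ^ p with hN
  set m := ⨍ y in ball (0 : En n) 1, w y with hm
  have hmean : ‖m‖ₑ ^ p ≤ D * N := by
    rcases eq_or_ne m 0 with h0 | h0
    · simp [h0, p0]
    have hcv := hcap _ (admissible_cutoff hE hw hwE m⁻¹)
    have hle : ‖m‖ₑ ^ p * c₀ ≤ 2 ^ p * 2 ^ (p - 1) * (1 + C₁) * N := by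
      calc ‖m‖ₑ ^ p * c₀ ≤ ‖m‖ₑ ^ p * ∫⁻ x in ball (0 : En n) 1,
            ‖fderiv ℝ (fun x => 2 * (1 - ‖x‖) * (1 - m⁻¹ * w x)) x‖ₑ ^ p := by gcongr
        _ = ∫⁻ x in ball (0 : En n) 1, (‖m‖ₑ *
            ‖fderiv ℝ (fun x => 2 * (1 - ‖x‖) * (1 - m⁻¹ * w x)) x‖ₑ) ^ p := by
            rw [← lintegral_const_mul _ ((measurable_fderiv ℝ _).enorm.pow_const p)]
            simp_rw [ENNReal.mul_rpow_of_nonneg _ _ p0.le]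
        _ ≤ ∫⁻ x in ball (0 : En n) 1, 2 ^ p * 2 ^ (p - 1) *
            (‖fderiv ℝ w x‖ₑ ^ p + ‖w x - m‖ₑ ^ p) := by
            refine setLIntegral_mono_ae' measurableSet_ball ?_
            filter_upwards [ae_enorm_fderiv_cutoff_le hw h0] with x hx hxB
            refine (ENNReal.rpow_le_rpow (hx hxB) p0.le).trans ?_
            rw [ENNReal.mul_rpow_of_nonneg _ _ p0.le, mul_assoc]
            gcongr
            exact ENNReal.rpow_add_le_mul_rpow_add_rpow _ _ hp.le
        _ = 2 ^ p * 2 ^ (p - 1) * (N + ∫⁻ x in ball (0 : En n) 1, ‖w x - m‖ₑ ^ p) := by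
            rw [lintegral_const_mul _ (by fun_prop), lintegral_add_left (by fun_prop)]
        _ ≤ 2 ^ p * 2 ^ (p - 1) * (N + C₁ * N) := by
            have := h₁ w hw
            rw [hdiv, ENNReal.rpow_one] at this
            gcongr
        _ = _ := by ring
    rw [hD, mul_assoc, mul_comm, ← div_eq_mul_inv, ENNReal.le_div_iff_mul_le (Or.inl hc₀)
      (Or.inl hct)]
    exact hle
  calc _ ≤ ∫⁻ x in ball (0 : En n) 1, 2 ^ (s - 1) * (‖w x - m‖ₑ ^ s + ‖m‖ₑ ^ s) := by
        refine lintegral_mono fun x => ?_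
        refine Eq.trans_le ?_ ((ENNReal.rpow_le_rpow (enorm_add_le (w x - m) m) s0.le).trans
          (ENNReal.rpow_add_le_mul_rpow_add_rpow _ _ (by linarith)))
        simp
    _ = 2 ^ (s - 1) * ((∫⁻ x in ball (0 : En n) 1, ‖w x - m‖ₑ ^ s) + ‖m‖ₑ ^ s * V) := by
        rw [lintegral_const_mul _ (by fun_prop), lintegral_add_left (by fun_prop),
          setLIntegral_const]
    _ ≤ 2 ^ (s - 1) * (C₂ * N ^ (s / p) + (D ^ (s / p) * N ^ (s / p)) * V) := by
        gcongr
        · exact h₂ w hw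
        · rw [← ENNReal.mul_rpow_of_nonneg _ _ (by positivity)]
          refine Eq.trans_le ?_ (ENNReal.rpow_le_rpow hmean (by positivity : 0 ≤ s / p))
          rw [← ENNReal.rpow_mul, mul_div_cancel₀ _ p0.ne']
    _ = _ := by ring

theorem setIntegral_rpow_eq_toReal {X : Type*} [MeasurableSpace X] {μ : Measure X} {f : X → ℝ}
    (hf : Measurable f) (h0 : ∀ x, 0 ≤ f x) {s : ℝ} (hs : 0 ≤ s) :
    ∫ x, f x ^ s ∂μ = (∫⁻ x, ‖f x‖ₑ ^ s ∂μ).toReal := by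
  rw [integral_eq_lintegral_of_nonneg_ae
    (Filter.Eventually.of_forall fun x => Real.rpow_nonneg (h0 x) s)
    (hf.pow_const s).aestronglyMeasurable]
  congr 1
  refine lintegral_congr fun x => ?_
  rw [← ofReal_norm, Real.norm_of_nonneg (h0 x), ENNReal.ofReal_rpow_of_nonneg (h0 x) hs]

theorem setIntegral_ball_eq {n : ℕ} (z : En n) {r : ℝ} (hr : 0 < r) (f : En n → ℝ) :
    ∫ x in ball z r, f x = r ^ n * ∫ x in ball (0 : En n) 1, f (z + r • x) := by
  have h : ∫ x, (ball z r).indicator f x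
      = r ^ n * ∫ x, (ball z r).indicator f (z + r • x) := by
    rw [Measure.integral_comp_smul_of_nonneg volume
      (fun y => (ball z r).indicator f (z + y)) r (hR := hr.le),
      integral_add_left_eq_self (μ := volume) ((ball z r).indicator f) z,
      finrank_euclideanSpace_fin, smul_eq_mul, mul_inv_cancel_left₀ (by positivity)]
  rw [← integral_indicator measurableSet_ball, h, ← integral_indicator measurableSet_ball]
  congr 2
  ext x
  have : z + r • x ∈ ball z r ↔ x ∈ ball (0 : En n) 1 := by
    rw [mem_ball, mem_ball, dist_self_add_left, dist_zero_right, norm_smul,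
      Real.norm_of_nonneg hr.le]
    exact mul_lt_iff_lt_one_right hr
  by_cases hx : x ∈ ball (0 : En n) 1
  · rw [indicator_of_mem (this.2 hx), indicator_of_mem hx]
  · rw [indicator_of_notMem (mt this.1 hx), indicator_of_notMem hx]

theorem setAverage_ball_eq {n : ℕ} (z : En n) {r : ℝ} (hr : 0 < r) (f : En n → ℝ) :
    ⨍ x in ball z r, f x =
      (volume.real (ball (0 : En n) 1))⁻¹ * ∫ x in ball (0 : En n) 1, f (z + r • x) := by
  have hv : volume.real (ball z r) = r ^ n * volume.real (ball (0 : En n) 1) := by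
    rw [Measure.real, Measure.addHaar_ball_of_pos volume z hr, ENNReal.toReal_mul,
      finrank_euclideanSpace_fin, ENNReal.toReal_ofReal (by positivity), Measure.real]
  rw [setAverage_eq, smul_eq_mul, hv, setIntegral_ball_eq z hr, mul_inv]
  field_simp

theorem gnorm_comp_add_smul {n : ℕ} (u : En n → ℝ) (z : En n) {r : ℝ} (hr : 0 < r) (x : En n) :
    gnorm (fun x => u (z + r • x)) x = r * gnorm u (z + r • x) := by
  have h : fderiv ℝ (fun x => u (z + r • x)) x = r • fderiv ℝ u (z + r • x) := by
    rw [fderiv_comp_smul (f := fun y => u (z + y)), fderiv_comp_add_left]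
  rw [gnorm, h, norm_smul, Real.norm_of_nonneg hr.le, gnorm]

theorem continuous_of_abs_sub_le_rpow {X : Type*} [PseudoMetricSpace X] {a : X → ℝ} {A α : ℝ}
    (hα : 0 < α) (h : ∀ x y, |a x - a y| ≤ A * dist x y ^ α) : Continuous a := by
  refine continuous_iff_continuousAt.2 fun x => ?_
  refine tendsto_iff_dist_tendsto_zero.2 (squeeze_zero (fun _ => dist_nonneg) (fun y => h y x) ?_)
  have : ContinuousAt (fun y => A * dist y x ^ α) x :=
    continuousAt_const.mul ((continuous_id.dist continuous_const).continuousAt.rpow_const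
      (Or.inr hα.le))
  simpa [ContinuousAt, Real.zero_rpow hα.ne'] using this

/-- In the `p`-phase the coefficient is comparable to `A * r ^ α` on the whole ball. -/
theorem le_three_mul_of_aInfOn_le {n : ℕ} {a : En n → ℝ} {A α r : ℝ} {z : En n}
    (hα : 0 < α) (hα1 : α ≤ 1) (hA : 0 ≤ A) (h : ∀ x y, |a x - a y| ≤ A * dist x y ^ α)
    (hr : 0 < r) (hphase : aInfOn a (ball z r) ≤ A * r ^ α) {x : En n} (hx : x ∈ ball z r) :
    a x ≤ 3 * A * r ^ α := by
  have h2 : (2 * r) ^ α ≤ 2 * r ^ α := by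
    rw [Real.mul_rpow zero_le_two hr.le]
    gcongr
    simpa using Real.rpow_le_rpow_of_exponent_le one_le_two hα1
  have hinf : a x - A * (2 * r ^ α) ≤ aInfOn a (ball z r) := by
    refine le_csInf ⟨a x, x, hx, rfl⟩ ?_
    rintro _ ⟨y, hy, rfl⟩
    have hd : dist x y ≤ 2 * r := by
      linarith [dist_triangle_right x y z, mem_ball.1 hx, mem_ball.1 hy]
    have hle : A * dist x y ^ α ≤ A * (2 * r ^ α) := by
      gcongr
      exact (Real.rpow_le_rpow dist_nonneg hd hα.le).trans h2
    linarith [le_abs_self (a x - a y), h x y]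
  linarith

theorem setIntegral_abs_rpow_le_of_lintegral {n : ℕ} {w : En n → ℝ} {K : ℝ≥0}
    (hw : LipschitzWith K w) {p s : ℝ} (hp : 0 < p) (hs : 0 < s) {C : ℝ≥0∞} (hC : C ≠ ⊤)
    (h : ∫⁻ x in ball (0 : En n) 1, ‖w x‖ₑ ^ s
        ≤ C * (∫⁻ x in ball (0 : En n) 1, ‖fderiv ℝ w x‖ₑ ^ p) ^ (s / p)) :
    ∫ x in ball (0 : En n) 1, |w x| ^ s
      ≤ C.toReal * (∫ x in ball (0 : En n) 1, gnorm w x ^ p) ^ (s / p) := by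
  have hN : ∫⁻ x in ball (0 : En n) 1, ‖fderiv ℝ w x‖ₑ ^ p ≠ ⊤ := by
    have : ∫⁻ x in ball (0 : En n) 1, ‖fderiv ℝ w x‖ₑ ^ p
        ≤ ∫⁻ x in ball (0 : En n) 1, (K : ℝ≥0∞) ^ p := by
      refine lintegral_mono fun x => ?_
      gcongr
      exact ENNReal.coe_le_coe.2 (norm_fderiv_le_of_lipschitz ℝ hw)
    refine (this.trans_lt ?_).ne
    rw [setLIntegral_const]
    exact ENNReal.mul_lt_top (ENNReal.rpow_lt_top_of_nonneg hp.le ENNReal.coe_ne_top)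
      measure_ball_lt_top
  rw [setIntegral_rpow_eq_toReal hw.continuous.measurable.abs (fun _ => abs_nonneg _) hs.le,
    setIntegral_rpow_eq_toReal (f := gnorm w) (measurable_fderiv ℝ w).norm
      (fun _ => norm_nonneg _) hp.le, ENNReal.toReal_rpow, ← ENNReal.toReal_mul]
  simp only [gnorm, enorm_norm, ← Real.norm_eq_abs]
  exact ENNReal.toReal_mono
    (ENNReal.mul_ne_top hC (ENNReal.rpow_ne_top_of_nonneg (by positivity) hN)) h

theorem rpow_mul_rpow_le_of_le {n : ℕ} (hn : 0 < n) {p q α r N : ℝ} (hp : 0 < p) (hpq : p < q)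
    (hpqα : q / p ≤ 1 + α / n) (hr : 0 < r) (hr1 : r ≤ 1) (hN : 0 ≤ N) :
    r ^ α * N ^ (q / p) ≤ ((r ^ n * N) ^ (1 / p)) ^ (q - p) * N := by
  have hn' : (0 : ℝ) < n := by exact_mod_cast hn
  rcases hN.eq_or_lt with rfl | hN
  · simp [Real.zero_rpow (div_pos (hp.trans hpq) hp).ne']
  have he : 1 / p * (q - p) = q / p - 1 := by field_simp
  have hexp : n * (q / p - 1) ≤ α := by
    have : q / p - 1 ≤ α / n := by linarith
    calc n * (q / p - 1) ≤ n * (α / n) := by gcongr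
      _ = α := by field_simp
  rw [← Real.rpow_mul (by positivity), he, Real.mul_rpow (by positivity) hN.le, mul_assoc,
    ← Real.rpow_natCast, ← Real.rpow_mul hr.le, ← Real.rpow_add_one hN.ne', sub_add_cancel]
  gcongr ?_ * _
  exact Real.rpow_le_rpow_of_exponent_ge hr hr1 hexp

/-- **Boundary Poincaré inequality in the `p`-phase** (Remark 7.1): if
`ℝⁿ ∖ Ω` is locally uniformly infimally `φ`-fat and the ball `B(z,r)` is in the
`p`-phase, i.e. `inf_{B(z,r)} a ≤ [a]_{0,α} r^α`, then
`⨍_{B(z,r)} φ(x,|u|) ≤ c (1 + [a]_{0,α} ‖r∇u‖_{L^p(B(z,r))}^{q-p}) ⨍_{B(z,r)} |r∇u|^p`. -/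
theorem p_phase_boundary_poincare
    (n : ℕ) (hn : 0 < n) (p q cfat : ℝ)
    (hp : 1 < p) (hpq : p < q) (hcfat : 0 < cfat) :
    ∃ c : ℝ, 0 < c ∧
      ∀ (α A ro : ℝ) (a : En n → ℝ) (Ω : Set (En n)),
        0 < α → α ≤ 1 → (∀ x, 0 ≤ a x) → 0 ≤ A →
        (∀ x y, |a x - a y| ≤ A * dist x y ^ α) →
        q / p ≤ 1 + α / n →
        IsOpen Ω → 0 < ro → ro ≤ 1 →
        LocUnifPhiFat a p q Ωᶜ cfat ro →
        ∀ z ∈ Ωᶜ, ∀ r : ℝ, 0 < r → r < ro →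
          aInfOn a (ball z r) ≤ A * r ^ α →
          ∀ u ∈ Lip0 Ω,
            (⨍ x in ball z r, phi a p q x |u x|) ≤
              c * (1 + A *
                    ((∫ x in ball z r, (r * gnorm u x) ^ p) ^ (1 / p)) ^ (q - p)) *
                (⨍ x in ball z r, (r * gnorm u x) ^ p) := by
  have p0 : 0 < p := by linarith
  have q0 : 0 < q := by linarith
  have hn' : (0 : ℝ) < n := by exact_mod_cast hn
  by_cases hsub : (n : ℝ) * (q / p - 1) ≤ 1
  swap
  · refine ⟨1, one_pos, fun α A ro a Ω hα hα1 _ _ _ hpqα => ?_⟩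
    refine absurd ?_ hsub
    calc n * (q / p - 1) ≤ n * (α / n) := by gcongr; linarith
      _ = α := by field_simp
      _ ≤ 1 := hα1
  have hc₀ : ENNReal.ofReal cfat ≠ 0 := by simpa using hcfat
  obtain ⟨C₁, hC₁, h₁⟩ := exists_mazya_sobolev n hp le_rfl (by simp [p0.ne']) hc₀
    ENNReal.ofReal_ne_top
  obtain ⟨C₂, hC₂, h₂⟩ := exists_mazya_sobolev n hp hpq.le hsub hc₀ ENNReal.ofReal_ne_top
  refine ⟨C₁.toReal + 3 * C₂.toReal + 1, by positivity, ?_⟩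
  intro α A ro a Ω hα hα1 ha hA hH hpqα _ _ hro1 hfat z hz r hr hrro hphase u hu
  obtain ⟨⟨K, hK⟩, -, hsupp⟩ := hu
  have hac := continuous_of_abs_sub_le_rpow hα hH
  have hbc : Continuous fun x : En n => a (z + r • x) := by fun_prop
  set W : En n → ℝ := fun x => u (z + r • x) with hW
  obtain ⟨L, hL⟩ : ∃ L, LipschitzWith L W := by
    refine ⟨K * ‖r‖₊, hK.comp (LipschitzWith.of_dist_le_mul fun x y => ?_)⟩
    rw [dist_add_left, dist_smul₀, coe_nnnorm]
  have hW0 : ∀ x ∈ shiftedSet Ωᶜ z r, W x = 0 := fun x hx =>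
    image_eq_zero_of_notMem_tsupport (f := u) fun hx' => hx.2 (hsupp hx')
  have hcap : ∀ v ∈ Adm (shiftedSet Ωᶜ z r) (ball (0 : En n) 1) 1, ENNReal.ofReal cfat ≤
      ∫⁻ x in ball (0 : En n) 1, ‖fderiv ℝ v x‖ₑ ^ p := fun v hv =>
    ofReal_le_lintegral_of_le_capPhiInf hp hpq (fun x => ha _) hbc (hfat z hz r hr hrro) hv
  have i₁ := setIntegral_abs_rpow_le_of_lintegral hL p0 p0 hC₁
    (h₁ _ W (fun x hx => hx.1) ⟨L, hL⟩ hW0 hcap)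
  have i₂ := setIntegral_abs_rpow_le_of_lintegral hL p0 q0 hC₂
    (h₂ _ W (fun x hx => hx.1) ⟨L, hL⟩ hW0 hcap)
  have hgW : ∀ x, r * gnorm u (z + r • x) = gnorm W x := fun x =>
    (gnorm_comp_add_smul u z hr x).symm
  rw [setAverage_ball_eq z hr, setAverage_ball_eq z hr, setIntegral_ball_eq z hr]
  simp only [hgW]
  set N := ∫ x in ball (0 : En n) 1, gnorm W x ^ p
  have hN : 0 ≤ N := integral_nonneg fun x => Real.rpow_nonneg (norm_nonneg _) p
  rw [div_self p0.ne', Real.rpow_one] at i₁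
  have hInt : ∀ f : En n → ℝ, Continuous f → IntegrableOn f (ball (0 : En n) 1) := fun f hf =>
    (hf.continuousOn.integrableOn_compact (isCompact_closedBall (0 : En n) 1)).mono_set
      ball_subset_closedBall
  have hcW : ∀ s : ℝ, 0 < s → Continuous fun x => |W x| ^ s := fun s hs =>
    hL.continuous.abs.rpow_const fun _ => Or.inr hs.le
  have hphi : ∫ x in ball (0 : En n) 1, phi a p q (z + r • x) |u (z + r • x)| ≤
      C₁.toReal * N + 3 * A * r ^ α * (C₂.toReal * N ^ (q / p)) := by
    calc _ ≤ ∫ x in ball (0 : En n) 1, (|W x| ^ p + 3 * A * r ^ α * |W x| ^ q) := by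
          refine setIntegral_mono_on (hInt _ ((hcW p p0).add (hbc.mul (hcW q q0))))
            (hInt _ ((hcW p p0).add (continuous_const.mul (hcW q q0)))) measurableSet_ball
            fun x hx => ?_
          have hx' : z + r • x ∈ ball z r := by
            rw [mem_ball_zero_iff] at hx
            rw [mem_ball, dist_self_add_left, norm_smul, Real.norm_of_nonneg hr.le]
            exact mul_lt_of_lt_one_right hr hx
          have := le_three_mul_of_aInfOn_le hα hα1 hA hH hr hphase hx'
          simp only [phi, hW]
          gcongr
      _ = (∫ x in ball (0 : En n) 1, |W x| ^ p) +
          3 * A * r ^ α * ∫ x in ball (0 : En n) 1, |W x| ^ q := by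
          rw [integral_add (hInt _ (hcW p p0)) ((hInt _ (hcW q q0)).const_mul _),
            integral_const_mul]
      _ ≤ _ := by gcongr
  have hpow := rpow_mul_rpow_le_of_le hn p0 hpq hpqα hr (hrro.le.trans hro1) hN
  set T := ((r ^ n * N) ^ (1 / p)) ^ (q - p)
  have hT : 0 ≤ T := by positivity
  have hc₁ : 0 ≤ C₁.toReal := ENNReal.toReal_nonneg
  have hc₂ : 0 ≤ C₂.toReal := ENNReal.toReal_nonneg
  have hfin : C₁.toReal * N + 3 * A * r ^ α * (C₂.toReal * N ^ (q / p)) ≤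
      (C₁.toReal + 3 * C₂.toReal + 1) * (1 + A * T) * N := by
    calc _ = C₁.toReal * N + 3 * C₂.toReal * A * (r ^ α * N ^ (q / p)) := by ring
      _ ≤ C₁.toReal * N + 3 * C₂.toReal * A * (T * N) := by gcongr
      _ ≤ C₁.toReal * N + 3 * C₂.toReal * A * (T * N) + (C₁.toReal * (A * T * N) +
          3 * C₂.toReal * N + (1 + A * T) * N) := le_add_of_nonneg_right (by positivity)
      _ = _ := by ring
  calc _ ≤ (volume.real (ball (0 : En n) 1))⁻¹ *
        ((C₁.toReal + 3 * C₂.toReal + 1) * (1 + A * T) * N) := by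
        gcongr
        exact hphi.trans hfin
    _ = _ := by ring
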